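/- Let μ, ν be Borel probability measures on ℝ^{d_x} and ℝ^{d_y} with finite fourth moments. Then S²(μ,ν) = inf_{A ∈ ℝ^{d_x×d_y}} [32‖A‖_F² + OT_A(μ,ν)], where ‖·‖_F is the Frobenius norm and OT_A is the (unregularized) optimal transport cost with cost function c_A. Moreover, the infimum is attained at some matrix A* all of whose entries lie in [−M_{μ,ν}/2, M_{μ,ν}/2], where M_{μ,ν} = √(M₂(μ)·M₂(ν)). -/

import Mathlib

/-!
For a coupling `π`, let `m(π)` be its cross-moment matrix, `m(π) i j = ∫ x i * y j ∂π`. Completing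
the square entrywise gives, for every matrix `A`,
`32‖A‖² + ∫ c_A ∂π = S2Cost π + 32 ‖A - m(π)/2‖²` (`sq_add_integral_costA`).

Hence `S2 ≤ 32‖A‖² + OTA A` for every `A`. Finite fourth moments make all the integrals converge
and bound `S2Cost` from below over the couplings, so the infima are genuine. By Cauchy–Schwarz,
`m(π)/2` lies in the box `[-M/2, M/2]^(dx × dy)`. Take couplings `πₙ` with `S2Cost πₙ → S2`; by
compactness of the box, `m(πₙ)/2 → A` along a subsequence, for some `A` in the box. Then
`32‖A‖² + OTA A ≤ S2Cost πₙ + 32 ‖A - m(πₙ)/2‖² → S2`, so `A` attains the infimum and its value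
is `S2`. This uses compactness only in the finite-dimensional space of matrices, and needs neither
compactness of the set of couplings nor existence of an optimal plan.
-/

open MeasureTheory
open scoped ENNReal NNReal BigOperators

noncomputable section

/-- The set of couplings of two measures. -/
def Couplings {E F : Type*} [MeasurableSpace E] [MeasurableSpace F]
    (μ : Measure E) (ν : Measure F) : Set (Measure (E × F)) :=
  {π | IsProbabilityMeasure π ∧ π.map Prod.fst = μ ∧ π.map Prod.snd = ν}

/-- Quadratic (2,2) GW distortion cost of a coupling. -/
def GWCost {E F : Type*} [NormedAddCommGroup E] [NormedAddCommGroup F]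
    [MeasurableSpace E] [MeasurableSpace F] (π : Measure (E × F)) : ℝ :=
  ∫ p, (‖p.1.1 - p.2.1‖ ^ 2 - ‖p.1.2 - p.2.2‖ ^ 2) ^ 2 ∂(π.prod π)

open Classical in
/-- KL divergence, with value `⊤` when it is not finite. -/
def KLD {Z : Type*} [MeasurableSpace Z] (π ρ : Measure Z) : ℝ≥0∞ :=
  if π ≪ ρ ∧ Integrable (MeasureTheory.llr π ρ) π then
    ENNReal.ofReal (∫ z, MeasureTheory.llr π ρ z ∂π) else ⊤

/-- ε-weighted entropic penalty. -/
def entTerm {Z : Type*} [MeasurableSpace Z] (ε : ℝ) (π ρ : Measure Z) : ℝ≥0∞ :=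
  ENNReal.ofReal ε * KLD π ρ

/-- Entropic (2,2) Gromov–Wasserstein cost `S_ε`. -/
def SEps {E F : Type*} [NormedAddCommGroup E] [NormedAddCommGroup F]
    [MeasurableSpace E] [MeasurableSpace F] (ε : ℝ) (μ : Measure E) (ν : Measure F) : ℝ :=
  sInf {v | ∃ π ∈ Couplings μ ν,
    entTerm ε π (μ.prod ν) ≠ ⊤ ∧ v = GWCost π + (entTerm ε π (μ.prod ν)).toReal}

/-- Squared (2,2) Gromov–Wasserstein distance `D(μ,ν)²`. -/
def GWsq {E F : Type*} [NormedAddCommGroup E] [NormedAddCommGroup F]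
    [MeasurableSpace E] [MeasurableSpace F] (μ : Measure E) (ν : Measure F) : ℝ :=
  sInf {v | ∃ π ∈ Couplings μ ν, v = GWCost π}


/-- The marginal-only part `S¹(μ,ν)` of the GW functional. -/
def S1 {E F : Type*} [NormedAddCommGroup E] [NormedAddCommGroup F]
    [MeasurableSpace E] [MeasurableSpace F] (μ : Measure E) (ν : Measure F) : ℝ :=
  (∫ p, ‖p.1 - p.2‖ ^ 4 ∂(μ.prod μ)) + (∫ p, ‖p.1 - p.2‖ ^ 4 ∂(ν.prod ν))
    - 4 * ∫ p, ‖p.1‖ ^ 2 * ‖p.2‖ ^ 2 ∂(μ.prod ν)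

/-- The coupling-dependent part of the GW functional evaluated at a coupling. -/
def S2Cost {dx dy : ℕ}
    (π : Measure (EuclideanSpace ℝ (Fin dx) × EuclideanSpace ℝ (Fin dy))) : ℝ :=
  (∫ p, -4 * (‖p.1‖ ^ 2 * ‖p.2‖ ^ 2) ∂π)
    - 8 * ∑ i : Fin dx, ∑ j : Fin dy, (∫ p, p.1 i * p.2 j ∂π) ^ 2

/-- The coupling-dependent part `S²_ε(μ,ν)` of the entropic GW functional. -/
def S2Eps {dx dy : ℕ} (ε : ℝ) (μ : Measure (EuclideanSpace ℝ (Fin dx)))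
    (ν : Measure (EuclideanSpace ℝ (Fin dy))) : ℝ :=
  sInf {v | ∃ π ∈ Couplings μ ν,
    entTerm ε π (μ.prod ν) ≠ ⊤ ∧ v = S2Cost π + (entTerm ε π (μ.prod ν)).toReal}

/-- The cost function `c_A(x,y) = −4‖x‖²‖y‖² − 32 xᵀAy`. -/
def costA {dx dy : ℕ} (A : Matrix (Fin dx) (Fin dy) ℝ)
    (x : EuclideanSpace ℝ (Fin dx)) (y : EuclideanSpace ℝ (Fin dy)) : ℝ :=
  -4 * (‖x‖ ^ 2 * ‖y‖ ^ 2) - 32 * ∑ i : Fin dx, ∑ j : Fin dy, x i * A i j * y j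

/-- The optimal transport cost with cost function `c_A`. -/
def OTA {dx dy : ℕ} (A : Matrix (Fin dx) (Fin dy) ℝ)
    (μ : Measure (EuclideanSpace ℝ (Fin dx))) (ν : Measure (EuclideanSpace ℝ (Fin dy))) : ℝ :=
  sInf {v | ∃ π ∈ Couplings μ ν, v = ∫ p, costA A p.1 p.2 ∂π}

/-- The entropic optimal transport cost with cost function `c_A` and parameter `ε`. -/
def OTAEps {dx dy : ℕ} (A : Matrix (Fin dx) (Fin dy) ℝ) (ε : ℝ)
    (μ : Measure (EuclideanSpace ℝ (Fin dx))) (ν : Measure (EuclideanSpace ℝ (Fin dy))) : ℝ :=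
  sInf {v | ∃ π ∈ Couplings μ ν, entTerm ε π (μ.prod ν) ≠ ⊤ ∧
    v = (∫ p, costA A p.1 p.2 ∂π) + (entTerm ε π (μ.prod ν)).toReal}

/-- The coupling-dependent part `S²(μ,ν)` of the (unregularized) GW functional. -/
def S2 {dx dy : ℕ} (μ : Measure (EuclideanSpace ℝ (Fin dx)))
    (ν : Measure (EuclideanSpace ℝ (Fin dy))) : ℝ :=
  sInf {v | ∃ π ∈ Couplings μ ν, v = S2Cost π}

open Filter Topology

/-- Cauchy–Schwarz, in squared form. -/
lemma sq_integral_mul_le {Ω : Type*} [MeasurableSpace Ω] {π : Measure Ω} {f g : Ω → ℝ}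
    (hf : MemLp f 2 π) (hg : MemLp g 2 π) :
    (∫ p, f p * g p ∂π) ^ 2 ≤ (∫ p, f p ^ 2 ∂π) * ∫ p, g p ^ 2 ∂π := by
  have hff := hf.integrable_sq
  have hgg := hg.integrable_sq
  have hfg : Integrable (fun p => f p * g p) π := hf.integrable_mul hg
  -- `t ↦ ∫ (t f + g)²` is a nonnegative quadratic polynomial, so its discriminant is nonpositive.
  have key : ∀ t : ℝ, 0 ≤ (∫ p, f p ^ 2 ∂π) * (t * t) + (2 * ∫ p, f p * g p ∂π) * t
      + ∫ p, g p ^ 2 ∂π := by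
    intro t
    have h0 : 0 ≤ ∫ p, (t * f p + g p) ^ 2 ∂π := integral_nonneg fun p => sq_nonneg _
    have h1 : ∫ p, (t * f p + g p) ^ 2 ∂π
        = ∫ p, (t * t * f p ^ 2 + 2 * t * (f p * g p) + g p ^ 2) ∂π := by
      congr 1; ext p; ring
    rw [h1, integral_add (f := fun p => t * t * f p ^ 2 + 2 * t * (f p * g p))
      ((hff.const_mul _).add (hfg.const_mul _)) hgg,
      integral_add (hff.const_mul _) (hfg.const_mul _), integral_const_mul,
      integral_const_mul] at h0
    linarith
  have h := discrim_le_zero key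
  simp only [discrim] at h
  nlinarith

section Coupling

variable {dx dy : ℕ} {μ : Measure (EuclideanSpace ℝ (Fin dx))}
  {ν : Measure (EuclideanSpace ℝ (Fin dy))}
  {π : Measure (EuclideanSpace ℝ (Fin dx) × EuclideanSpace ℝ (Fin dy))}

/-- The cross-moment matrix `∫ x yᵀ ∂π`. -/
def crossMoment {dx dy : ℕ}
    (π : Measure (EuclideanSpace ℝ (Fin dx) × EuclideanSpace ℝ (Fin dy))) :
    Matrix (Fin dx) (Fin dy) ℝ :=
  fun i j => ∫ p, p.1 i * p.2 j ∂π

lemma integrable_fst_of_coupling (hπ : π ∈ Couplings μ ν)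
    {f : EuclideanSpace ℝ (Fin dx) → ℝ} (hf : Integrable f μ) :
    Integrable (fun p => f p.1) π := by
  rw [← hπ.2.1] at hf
  exact hf.comp_measurable measurable_fst

lemma integrable_snd_of_coupling (hπ : π ∈ Couplings μ ν)
    {f : EuclideanSpace ℝ (Fin dy) → ℝ} (hf : Integrable f ν) :
    Integrable (fun p => f p.2) π := by
  rw [← hπ.2.2] at hf
  exact hf.comp_measurable measurable_snd

lemma integral_fst_of_coupling (hπ : π ∈ Couplings μ ν)
    {f : EuclideanSpace ℝ (Fin dx) → ℝ} (hf : Integrable f μ) :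
    ∫ p, f p.1 ∂π = ∫ x, f x ∂μ := by
  rw [← hπ.2.1] at hf ⊢
  exact (integral_map measurable_fst.aemeasurable hf.aestronglyMeasurable).symm

lemma integral_snd_of_coupling (hπ : π ∈ Couplings μ ν)
    {f : EuclideanSpace ℝ (Fin dy) → ℝ} (hf : Integrable f ν) :
    ∫ p, f p.2 ∂π = ∫ y, f y ∂ν := by
  rw [← hπ.2.2] at hf ⊢
  exact (integral_map measurable_snd.aemeasurable hf.aestronglyMeasurable).symm

lemma integrable_norm_sq_of_pow_four {n : ℕ} {ρ : Measure (EuclideanSpace ℝ (Fin n))}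
    [IsProbabilityMeasure ρ] (h : Integrable (fun x => ‖x‖ ^ 4) ρ) :
    Integrable (fun x => ‖x‖ ^ 2) ρ := by
  refine ((integrable_const (1 : ℝ)).add h).mono' (by fun_prop) (ae_of_all _ fun x => ?_)
  rw [Real.norm_of_nonneg (by positivity)]
  simp only [Pi.add_apply]
  nlinarith [sq_nonneg (‖x‖ ^ 2 - 1), sq_nonneg (‖x‖ ^ 2)]

lemma sq_apply_le_norm_sq {n : ℕ} (x : EuclideanSpace ℝ (Fin n)) (i : Fin n) :
    x i ^ 2 ≤ ‖x‖ ^ 2 := by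
  rw [← sq_abs, ← Real.norm_eq_abs]
  exact pow_le_pow_left₀ (norm_nonneg _) (PiLp.norm_apply_le x i) 2

lemma memLp_coord {n : ℕ} {ρ : Measure (EuclideanSpace ℝ (Fin n))}
    (h : Integrable (fun x => ‖x‖ ^ 2) ρ) (i : Fin n) : MemLp (fun x => x i) 2 ρ := by
  have hm : AEStronglyMeasurable (fun x : EuclideanSpace ℝ (Fin n) => x i) ρ :=
    Continuous.aestronglyMeasurable (by fun_prop)
  rw [memLp_two_iff_integrable_sq hm]
  refine h.mono' (hm.pow 2) (ae_of_all _ fun x => ?_)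
  rw [Real.norm_of_nonneg (by positivity)]
  exact sq_apply_le_norm_sq x i

lemma memLp_coord_fst (hπ : π ∈ Couplings μ ν) (h : Integrable (fun x => ‖x‖ ^ 2) μ)
    (i : Fin dx) : MemLp (fun p => p.1 i) 2 π := by
  have := memLp_coord h i
  rw [← hπ.2.1] at this
  exact this.comp_of_map measurable_fst.aemeasurable

lemma memLp_coord_snd (hπ : π ∈ Couplings μ ν) (h : Integrable (fun y => ‖y‖ ^ 2) ν)
    (j : Fin dy) : MemLp (fun p => p.2 j) 2 π := by
  have := memLp_coord h j
  rw [← hπ.2.2] at this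
  exact this.comp_of_map measurable_snd.aemeasurable

lemma abs_crossMoment_le (hπ : π ∈ Couplings μ ν) (h2μ : Integrable (fun x => ‖x‖ ^ 2) μ)
    (h2ν : Integrable (fun y => ‖y‖ ^ 2) ν) (i : Fin dx) (j : Fin dy) :
    |crossMoment π i j| ≤ Real.sqrt ((∫ x, ‖x‖ ^ 2 ∂μ) * ∫ y, ‖y‖ ^ 2 ∂ν) := by
  apply Real.abs_le_sqrt
  have hx := memLp_coord_fst hπ h2μ i
  have hy := memLp_coord_snd hπ h2ν j
  refine (sq_integral_mul_le hx hy).trans (mul_le_mul ?_ ?_ ?_ ?_)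
  · rw [← integral_fst_of_coupling hπ h2μ]
    exact integral_mono hx.integrable_sq (integrable_fst_of_coupling hπ h2μ)
      fun p => sq_apply_le_norm_sq p.1 i
  · rw [← integral_snd_of_coupling hπ h2ν]
    exact integral_mono hy.integrable_sq (integrable_snd_of_coupling hπ h2ν)
      fun p => sq_apply_le_norm_sq p.2 j
  · exact integral_nonneg fun p => sq_nonneg _
  · exact integral_nonneg fun p => sq_nonneg _

lemma integrable_norm_sq_mul_norm_sq (hπ : π ∈ Couplings μ ν)
    (h4μ : Integrable (fun x => ‖x‖ ^ 4) μ) (h4ν : Integrable (fun y => ‖y‖ ^ 4) ν) :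
    Integrable (fun p => -4 * (‖p.1‖ ^ 2 * ‖p.2‖ ^ 2)) π := by
  refine Integrable.const_mul ?_ _
  refine ((integrable_fst_of_coupling hπ h4μ).add (integrable_snd_of_coupling hπ h4ν)).mono'
    (by fun_prop) (ae_of_all _ fun p => ?_)
  rw [Real.norm_of_nonneg (by positivity)]
  simp only [Pi.add_apply]
  nlinarith [sq_nonneg (‖p.1‖ ^ 2 - ‖p.2‖ ^ 2), sq_nonneg (‖p.1‖ ^ 2), sq_nonneg (‖p.2‖ ^ 2)]

/-- Completing the square in the matrix variable: the minimum over `A` is attained at half the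
cross-moment matrix. -/
lemma sq_add_integral_costA (hπ : π ∈ Couplings μ ν) [IsProbabilityMeasure μ]
    [IsProbabilityMeasure ν]
    (h4μ : Integrable (fun x => ‖x‖ ^ 4) μ) (h4ν : Integrable (fun y => ‖y‖ ^ 4) ν)
    (A : Matrix (Fin dx) (Fin dy) ℝ) :
    32 * ∑ i, ∑ j, (A i j) ^ 2 + ∫ p, costA A p.1 p.2 ∂π
      = S2Cost π + 32 * ∑ i, ∑ j, (A i j - crossMoment π i j / 2) ^ 2 := by
  have h2μ := integrable_norm_sq_of_pow_four h4μ
  have h2ν := integrable_norm_sq_of_pow_four h4ν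
  have hint : ∀ i j, Integrable (fun p => A i j * (p.1 i * p.2 j)) π := fun i j =>
    ((memLp_coord_fst hπ h2μ i).integrable_mul (memLp_coord_snd hπ h2ν j)).const_mul _
  have hsum : ∀ i, Integrable (fun p => ∑ j, A i j * (p.1 i * p.2 j)) π := fun i =>
    integrable_finsetSum _ fun j _ => hint i j
  have hcost : ∫ p, costA A p.1 p.2 ∂π
      = ∫ p, -4 * (‖p.1‖ ^ 2 * ‖p.2‖ ^ 2) ∂π
        - 32 * ∑ i, ∑ j, A i j * crossMoment π i j := by
    have : (fun p : EuclideanSpace ℝ (Fin dx) × EuclideanSpace ℝ (Fin dy) => costA A p.1 p.2)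
        = fun p => -4 * (‖p.1‖ ^ 2 * ‖p.2‖ ^ 2)
          - 32 * ∑ i, ∑ j, A i j * (p.1 i * p.2 j) := by
      ext p
      simp only [costA]
      congr 2
      refine Finset.sum_congr rfl fun i _ => Finset.sum_congr rfl fun j _ => ?_
      ring
    rw [this, integral_sub (integrable_norm_sq_mul_norm_sq hπ h4μ h4ν)
      ((integrable_finsetSum _ fun i _ => hsum i).const_mul _),
      integral_const_mul (32 : ℝ), integral_finsetSum _ fun i _ => hsum i]
    congr 2
    refine Finset.sum_congr rfl fun i _ => ?_
    rw [integral_finsetSum _ fun j _ => hint i j]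
    refine Finset.sum_congr rfl fun j _ => ?_
    rw [integral_const_mul, crossMoment]
  have hsq : 32 * ∑ i, ∑ j, (A i j - crossMoment π i j / 2) ^ 2
      = 32 * ∑ i, ∑ j, (A i j) ^ 2 - 32 * ∑ i, ∑ j, A i j * crossMoment π i j
        + 8 * ∑ i, ∑ j, (crossMoment π i j) ^ 2 := by
    simp only [Finset.mul_sum, ← Finset.sum_sub_distrib, ← Finset.sum_add_distrib]
    refine Finset.sum_congr rfl fun i _ => Finset.sum_congr rfl fun j _ => ?_
    ring
  have hS : S2Cost π = ∫ p, -4 * (‖p.1‖ ^ 2 * ‖p.2‖ ^ 2) ∂π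
      - 8 * ∑ i, ∑ j, (crossMoment π i j) ^ 2 := rfl
  rw [hcost, hsq, hS]
  ring

/-- The infimum defining `S2` is over a set bounded below, so `sInf` takes no junk value. -/
lemma exists_le_S2Cost [IsProbabilityMeasure μ] [IsProbabilityMeasure ν]
    (h4μ : Integrable (fun x => ‖x‖ ^ 4) μ) (h4ν : Integrable (fun y => ‖y‖ ^ 4) ν) :
    ∃ C : ℝ, ∀ π ∈ Couplings μ ν, C ≤ S2Cost π := by
  have h2μ := integrable_norm_sq_of_pow_four h4μ
  have h2ν := integrable_norm_sq_of_pow_four h4ν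
  refine ⟨-2 * (∫ x, ‖x‖ ^ 4 ∂μ + ∫ y, ‖y‖ ^ 4 ∂ν) - 8 * ∑ _i : Fin dx, ∑ _j : Fin dy,
    (Real.sqrt ((∫ x, ‖x‖ ^ 2 ∂μ) * ∫ y, ‖y‖ ^ 2 ∂ν)) ^ 2, fun π hπ => ?_⟩
  have hx := integrable_fst_of_coupling hπ h4μ
  have hy := integrable_snd_of_coupling hπ h4ν
  refine sub_le_sub ?_ (mul_le_mul_of_nonneg_left ?_ (by norm_num))
  · rw [← integral_fst_of_coupling hπ h4μ, ← integral_snd_of_coupling hπ h4ν,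
      ← integral_add hx hy, ← integral_const_mul]
    refine integral_mono ((hx.add hy).const_mul _)
      (integrable_norm_sq_mul_norm_sq hπ h4μ h4ν) fun p => ?_
    simp only
    nlinarith [sq_nonneg (‖p.1‖ ^ 2 - ‖p.2‖ ^ 2)]
  · refine Finset.sum_le_sum fun i _ => Finset.sum_le_sum fun j _ => ?_
    exact sq_le_sq' (abs_le.1 (abs_crossMoment_le hπ h2μ h2ν i j)).1
      (abs_le.1 (abs_crossMoment_le hπ h2μ h2ν i j)).2

lemma couplings_nonempty [IsProbabilityMeasure μ] [IsProbabilityMeasure ν] :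
    (Couplings μ ν).Nonempty :=
  ⟨μ.prod ν, inferInstance, Measure.fst_prod, Measure.snd_prod⟩

end Coupling

/-- **GW duality:** `S²(μ,ν) = inf_{A ∈ ℝ^{d_x×d_y}} [32‖A‖_F² + OT_A(μ,ν)]`, and the
infimum is attained at a matrix with all entries in `[−M_{μ,ν}/2, M_{μ,ν}/2]`, where
`M_{μ,ν} = √(M₂(μ)M₂(ν))`. -/
theorem gw_duality (dx dy : ℕ)
    (μ : Measure (EuclideanSpace ℝ (Fin dx))) (ν : Measure (EuclideanSpace ℝ (Fin dy)))
    [IsProbabilityMeasure μ] [IsProbabilityMeasure ν]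
    (h4μ : Integrable (fun x => ‖x‖ ^ 4) μ) (h4ν : Integrable (fun y => ‖y‖ ^ 4) ν) :
    (S2 μ ν
      = ⨅ A : Matrix (Fin dx) (Fin dy) ℝ,
          (32 * ∑ i : Fin dx, ∑ j : Fin dy, (A i j) ^ 2 + OTA A μ ν)) ∧
    ∃ A : Matrix (Fin dx) (Fin dy) ℝ,
      (∀ i j, |A i j| ≤ Real.sqrt ((∫ x, ‖x‖ ^ 2 ∂μ) * ∫ y, ‖y‖ ^ 2 ∂ν) / 2) ∧
      32 * ∑ i : Fin dx, ∑ j : Fin dy, (A i j) ^ 2 + OTA A μ ν = S2 μ ν := by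
  obtain ⟨C, hC⟩ := exists_le_S2Cost h4μ h4ν
  obtain ⟨π₀, hπ₀⟩ := couplings_nonempty (μ := μ) (ν := ν)
  have h2μ := integrable_norm_sq_of_pow_four h4μ
  have h2ν := integrable_norm_sq_of_pow_four h4ν
  have hS2 : ∀ π ∈ Couplings μ ν, S2 μ ν ≤ S2Cost π := fun π hπ =>
    csInf_le ⟨C, by rintro _ ⟨π, hπ, rfl⟩; exact hC π hπ⟩ ⟨π, hπ, rfl⟩
  have hsq : ∀ B : Matrix (Fin dx) (Fin dy) ℝ, 0 ≤ ∑ i, ∑ j, (B i j) ^ 2 := fun B =>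
    Finset.sum_nonneg fun i _ => Finset.sum_nonneg fun j _ => sq_nonneg _
  have hlow : ∀ (A : Matrix (Fin dx) (Fin dy) ℝ), ∀ π ∈ Couplings μ ν,
      S2 μ ν - 32 * ∑ i, ∑ j, (A i j) ^ 2 ≤ ∫ p, costA A p.1 p.2 ∂π := by
    intro A π hπ
    have h1 := sq_add_integral_costA hπ h4μ h4ν A
    have h2 := hsq (fun i j => A i j - crossMoment π i j / 2)
    have h3 := hS2 π hπ
    linarith
  have hge : ∀ A : Matrix (Fin dx) (Fin dy) ℝ,
      S2 μ ν ≤ 32 * ∑ i, ∑ j, (A i j) ^ 2 + OTA A μ ν := by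
    intro A
    have : S2 μ ν - 32 * ∑ i, ∑ j, (A i j) ^ 2 ≤ OTA A μ ν :=
      le_csInf ⟨_, π₀, hπ₀, rfl⟩ (by rintro _ ⟨π, hπ, rfl⟩; exact hlow A π hπ)
    linarith
  have hle : ∀ (A : Matrix (Fin dx) (Fin dy) ℝ), ∀ π ∈ Couplings μ ν,
      32 * ∑ i, ∑ j, (A i j) ^ 2 + OTA A μ ν
        ≤ S2Cost π + 32 * ∑ i, ∑ j, (A i j - crossMoment π i j / 2) ^ 2 := by
    intro A π hπ
    rw [← sq_add_integral_costA hπ h4μ h4ν A]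
    have : OTA A μ ν ≤ ∫ p, costA A p.1 p.2 ∂π :=
      csInf_le ⟨_, by rintro _ ⟨π, hπ, rfl⟩; exact hlow A π hπ⟩ ⟨π, hπ, rfl⟩
    linarith
  suffices hmain : ∃ A : Matrix (Fin dx) (Fin dy) ℝ,
      (∀ i j, |A i j| ≤ Real.sqrt ((∫ x, ‖x‖ ^ 2 ∂μ) * ∫ y, ‖y‖ ^ 2 ∂ν) / 2) ∧
      32 * ∑ i : Fin dx, ∑ j : Fin dy, (A i j) ^ 2 + OTA A μ ν = S2 μ ν by
    refine ⟨le_antisymm (le_ciInf hge) ?_, hmain⟩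
    obtain ⟨A, -, hA⟩ := hmain
    exact (ciInf_le ⟨_, by rintro _ ⟨B, rfl⟩; exact hge B⟩ A).trans hA.le
  set M := Real.sqrt ((∫ x, ‖x‖ ^ 2 ∂μ) * ∫ y, ‖y‖ ^ 2 ∂ν) with hM
  obtain ⟨v, -, hv, hvmem⟩ := exists_seq_tendsto_sInf
    (S := {v | ∃ π ∈ Couplings μ ν, v = S2Cost π}) ⟨_, π₀, hπ₀, rfl⟩
    ⟨C, by rintro _ ⟨π, hπ, rfl⟩; exact hC π hπ⟩
  choose π hπ hvπ using hvmem
  -- The box is an order interval for the product order on `Fin dx → Fin dy → ℝ`.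
  obtain ⟨A, hA, φ, hφ, hlim⟩ :=
    (isCompact_Icc : IsCompact (Set.Icc (fun (_ : Fin dx) (_ : Fin dy) => -(M / 2))
      (fun _ _ => M / 2))).tendsto_subseq (x := fun n i j => crossMoment (π n) i j / 2) (by
        intro n
        have h := fun i j => abs_le.1 (abs_crossMoment_le (hπ n) h2μ h2ν i j)
        exact ⟨fun i j => by linarith [(h i j).1], fun i j => by linarith [(h i j).2]⟩)
  refine ⟨A, fun i j => abs_le.2 ⟨hA.1 i j, hA.2 i j⟩, le_antisymm ?_ (hge A)⟩
  have hentry : ∀ i j, Tendsto (fun n => crossMoment (π (φ n)) i j / 2) atTop (𝓝 (A i j)) :=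
    fun i j => tendsto_pi_nhds.1 (tendsto_pi_nhds.1 hlim i) j
  have herr : Tendsto (fun n => v (φ n)
      + 32 * ∑ i, ∑ j, (A i j - crossMoment (π (φ n)) i j / 2) ^ 2) atTop
      (𝓝 (S2 μ ν + 32 * ∑ i, ∑ j, (A i j - A i j) ^ 2)) :=
    (hv.comp hφ.tendsto_atTop).add (Tendsto.const_mul _ (tendsto_finsetSum _ fun i _ =>
      tendsto_finsetSum _ fun j _ => ((hentry i j).const_sub (A i j)).pow 2))
  have hbound := ge_of_tendsto' herr fun n => by
    rw [hvπ (φ n)]; exact hle A _ (hπ (φ n))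
  simpa using hbound
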